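/- arXiv:2206.03533 — 2 statements merged into one kernel-verified Lean document; each statement's English description precedes it below -/
import Mathlib

section
/- An integral domain R is a coherent DW-domain if and only if every finitely generated torsion-free R-module is w-FP-projective. -/
open CategoryTheory

universe u

noncomputable section

variable (R : Type u) [CommRing R]

/-- The Ext group `Ext^n_R(M, N)` as an `R`-module (via `ModuleCat`). -/
def extMod (M N : Type u) [AddCommGroup M] [Module R M]
    [AddCommGroup N] [Module R N] (n : ℕ) : ModuleCat R :=
  ((Ext R (ModuleCat R) n).obj (Opposite.op (ModuleCat.of R M))).obj (ModuleCat.of R N)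

/-- `J` is a Glaz–Vasconcelos ideal: finitely generated and the natural map
`R → Hom_R(J, R)` is bijective. -/
def IsGVIdeal (J : Ideal R) : Prop :=
  J.FG ∧ Function.Bijective (fun r : R => (r • J.subtype : J →ₗ[R] R))

/-- A module is GV-torsion if every element is annihilated by some GV-ideal. -/
def IsGVTorsion (M : Type u) [AddCommGroup M] [Module R M] : Prop :=
  ∀ x : M, ∃ J : Ideal R, IsGVIdeal R J ∧ ∀ j ∈ J, j • x = 0

/-- An ideal `I` is a `w`-ideal if it is `w`-closed: whenever `J x ⊆ I` for some
GV-ideal `J`, one has `x ∈ I`. -/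
def IsWIdeal (I : Ideal R) : Prop :=
  ∀ (x : R) (J : Ideal R), IsGVIdeal R J → (∀ j ∈ J, j * x ∈ I) → x ∈ I

/-- `R` is a DW-ring if every maximal ideal is a `w`-ideal. -/
def IsDWRing : Prop :=
  ∀ m : Ideal R, m.IsMaximal → IsWIdeal R m

/-- `A` is absolutely `w`-pure if `Ext^1_R(N, A)` is GV-torsion for every
finitely presented module `N`. -/
def IsAbsolutelyWPure (A : Type u) [AddCommGroup A] [Module R A] : Prop :=
  ∀ (N : Type u) [AddCommGroup N] [Module R N], Module.FinitePresentation R N →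
    IsGVTorsion R (extMod R N A 1)

/-- `M` is `w`-FP-projective if `Ext^1_R(M, A) = 0` for every absolutely
`w`-pure module `A`. -/
def IsWFPProjective (M : Type u) [AddCommGroup M] [Module R M] : Prop :=
  ∀ (A : Type u) [AddCommGroup A] [Module R A], IsAbsolutelyWPure R A →
    Subsingleton (extMod R M A 1)

end
def IsCoherentRing (R : Type u) [CommRing R] : Prop :=
  ∀ I : Ideal R, I.FG → Module.FinitePresentation R I

/-!
For a presentation `p : F → M` with `F` projective, `Ext¹(M, A) = 0` means that every map
`ker p → A` extends to `F`.

* Let `M` be finitely generated, `F` finite free and `K = ker p`. For each finite `s ⊆ K` embed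
  `F / span s` in an injective module `E s`. The families in `∏ E s` vanishing for all large `s`
  form an absolutely `w`-pure module, which receives `K` through the quotient maps. An extension to
  the finitely generated module `F` vanishes at a single `s`, so that `K = span s`. Hence a
  `w`-FP-projective finitely generated module is finitely presented, and if all finitely generated
  ideals are `w`-FP-projective, then `R` is coherent.
* Let `J` be a `w`-FP-projective GV-ideal. Modules killed by `J` are absolutely `w`-pure, so
  `K → K / JK` extends to `F`, and Cayley–Hamilton turns the extension into a map `s : J → F = Rⁿ`
  such that `p ∘ s` is multiplication by some `a ∈ 1 + J`. As `Hom(J, R) = R`, `s` is multiplication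
  by a vector `r ∈ Rⁿ`, so `a = p r ∈ J` and `J = R`. Hence `R` is a DW-ring.
* Conversely, over a coherent ring the finitely generated submodules of `Rⁿ` are finitely
  presented, and over a DW-ring the only GV-ideal is `R`, so GV-torsion modules vanish.

Over a domain, the finitely generated modules that embed in some `Rⁿ` are the torsion-free ones.
-/

section LinearAlgebra

variable {R : Type u} [CommRing R]

lemma surjective_lcomp_ker_of_comp_eq {F F' M A : Type*} [AddCommGroup F] [Module R F]
    [AddCommGroup F'] [Module R F'] [AddCommGroup M] [Module R M] [AddCommGroup A] [Module R A]
    {p : F →ₗ[R] M} {p' : F' →ₗ[R] M} {u : F →ₗ[R] F'} {v : F' →ₗ[R] F}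
    (hu : p' ∘ₗ u = p) (hv : p ∘ₗ v = p')
    (h : Function.Surjective (LinearMap.lcomp R A (LinearMap.ker p).subtype)) :
    Function.Surjective (LinearMap.lcomp R A (LinearMap.ker p').subtype) := by
  intro g
  have hpu (x : F) : p' (u x) = p x := LinearMap.congr_fun hu x
  have hpv (y : F') : p (v y) = p' y := LinearMap.congr_fun hv y
  let uKer : LinearMap.ker p →ₗ[R] LinearMap.ker p' :=
    u.restrict fun x hx ↦ by rwa [LinearMap.mem_ker, hpu]
  let defect : F' →ₗ[R] LinearMap.ker p' :=
    (LinearMap.id - u ∘ₗ v).codRestrict _ fun y ↦ by simp [hpu, hpv]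
  obtain ⟨e, he⟩ := h (g ∘ₗ uKer)
  refine ⟨g ∘ₗ defect + e ∘ₗ v, LinearMap.ext fun y ↦ ?_⟩
  have hvy : v y ∈ LinearMap.ker p := by rw [LinearMap.mem_ker, hpv]; exact y.2
  have hsplit : defect y + uKer ⟨v y, hvy⟩ = y := Subtype.ext (by simp [defect, uKer])
  have hev : e (v y) = g (uKer ⟨v y, hvy⟩) := LinearMap.congr_fun he ⟨v y, hvy⟩
  calc g (defect y) + e (v y) = g (defect y + uKer ⟨v y, hvy⟩) := by rw [hev, map_add]
    _ = g y := by rw [hsplit]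

lemma exact_lcomp_iff_surjective_lcomp_ker {P₂ P₁ P₀ M A : Type*} [AddCommGroup P₂] [Module R P₂]
    [AddCommGroup P₁] [Module R P₁] [AddCommGroup P₀] [Module R P₀] [AddCommGroup M] [Module R M]
    [AddCommGroup A] [Module R A] {d₂ : P₂ →ₗ[R] P₁} {d₁ : P₁ →ₗ[R] P₀} {p : P₀ →ₗ[R] M}
    (h₁ : Function.Exact d₂ d₁) (h₀ : Function.Exact d₁ p) :
    Function.Exact (LinearMap.lcomp R A d₁) (LinearMap.lcomp R A d₂) ↔
      Function.Surjective (LinearMap.lcomp R A (LinearMap.ker p).subtype) := by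
  let d : P₁ →ₗ[R] LinearMap.ker p := d₁.codRestrict _ h₀.apply_apply_eq_zero
  have hd : Function.Surjective d := by
    rintro ⟨y, hy⟩
    obtain ⟨x, rfl⟩ := (h₀ y).1 hy
    exact ⟨x, rfl⟩
  have hexact : Function.Exact d₂ d := fun x ↦ by rw [← h₁ x, Subtype.ext_iff]; rfl
  have hHom := LinearMap.exact_lcomp_of_exact_of_surjective A hexact hd
  have hinj : Function.Injective (LinearMap.lcomp R A d) := fun f g hfg ↦
    LinearMap.cancel_right hd |>.1 hfg
  constructor
  · intro h g
    obtain ⟨e, he⟩ := (h (g ∘ₗ d)).1 ((hHom _).2 ⟨g, rfl⟩)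
    exact ⟨e, hinj he⟩
  · intro h g
    rw [hHom g]
    constructor
    · rintro ⟨k, rfl⟩
      obtain ⟨e, rfl⟩ := h k
      exact ⟨e, rfl⟩
    · rintro ⟨e, rfl⟩
      exact ⟨e ∘ₗ (LinearMap.ker p).subtype, rfl⟩

lemma exists_mul_eq_smul_one_of_range_one_sub_le {K : Type*} [AddCommGroup K] [Module R K]
    [Module.Finite R K] {J : Ideal R} {φ : Module.End R K}
    (h : LinearMap.range (1 - φ) ≤ J • (⊤ : Submodule R K)) :
    ∃ a : R, a - 1 ∈ J ∧ ∃ ψ : Module.End R K, ψ * φ = a • 1 := by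
  -- Cayley–Hamilton: `1 - φ` is a root of some monic `q ≡ X ^ n` mod `J`, so `a = q(1) ≡ 1` is a
  -- multiple of `1 - (1 - φ) = φ`.
  obtain ⟨q, hq, -, hcoeff, hroot⟩ :=
    LinearMap.exists_monic_and_natDegree_eq_and_coeff_mem_pow_and_aeval_eq_zero R (1 - φ) J h
  have hmap : q.map (Ideal.Quotient.mk J) = Polynomial.X ^ q.natDegree := by
    ext k
    rw [Polynomial.coeff_map, Polynomial.coeff_X_pow]
    split_ifs with hk
    · rw [hk, hq.coeff_natDegree, map_one]
    · rcases lt_or_gt_of_ne hk with hlt | hgt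
      · exact Ideal.Quotient.eq_zero_iff_mem.2
          (Ideal.pow_le_self (Nat.sub_ne_zero_of_lt hlt) (hcoeff k))
      · rw [Polynomial.coeff_eq_zero_of_natDegree_lt hgt, map_zero]
  obtain ⟨s, hs⟩ := Polynomial.X_sub_C_dvd_sub_C_eval (p := q) (a := 1)
  refine ⟨q.eval 1, ?_, Polynomial.aeval (1 - φ) s, ?_⟩
  · rw [← Ideal.Quotient.mk_eq_mk_iff_sub_mem, ← Polynomial.eval_map_apply, hmap]
    simp
  · have := congrArg (Polynomial.aeval (1 - φ)) ((mul_comm _ s).symm.trans hs.symm)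
    simpa [hroot, Algebra.algebraMap_eq_smul_one] using this

lemma exists_comp_eq_smul_id_of_forall_surjective_lcomp_ker {F M : Type u}
    [AddCommGroup F] [Module R F] [Module.Projective R F] [AddCommGroup M] [Module R M]
    {p : F →ₗ[R] M} (hp : Function.Surjective p) (hker : (LinearMap.ker p).FG) {J : Ideal R}
    (h : ∀ (A : Type u) [AddCommGroup A] [Module R A], J ≤ Module.annihilator R A →
      Function.Surjective (LinearMap.lcomp R A (LinearMap.ker p).subtype)) :
    ∃ a : R, a - 1 ∈ J ∧ ∃ s : M →ₗ[R] F, p ∘ₗ s = a • LinearMap.id := by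
  let K := LinearMap.ker p
  let π : K →ₗ[R] K ⧸ J • (⊤ : Submodule R K) := Submodule.mkQ _
  have : Module.Finite R K := Module.Finite.of_fg hker
  obtain ⟨f, hf⟩ := h _ ((Module.isTorsionBySet_iff_subset_annihilator R _).1
    (Module.isTorsionBySet_quotient_ideal_smul K J)) π
  obtain ⟨g, hg⟩ := Module.projective_lifting_property π f (Submodule.mkQ_surjective _)
  have hrange : LinearMap.range (1 - g ∘ₗ K.subtype) ≤ J • (⊤ : Submodule R K) := by
    rw [← Submodule.ker_mkQ (J • (⊤ : Submodule R K)), LinearMap.range_le_ker_iff]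
    change π ∘ₗ (LinearMap.id - g ∘ₗ K.subtype) = 0
    rw [LinearMap.comp_sub, ← LinearMap.comp_assoc, hg, LinearMap.comp_id]
    exact sub_eq_zero.2 hf.symm
  obtain ⟨a, haJ, ψ, hψ⟩ := exists_mul_eq_smul_one_of_range_one_sub_le hrange
  let e : F →ₗ[R] F := a • LinearMap.id - K.subtype ∘ₗ ψ ∘ₗ g
  have he : e ∘ₗ K.subtype = 0 := by
    ext x
    have hx : ψ (g x) = a • x := LinearMap.congr_fun hψ x
    simp [e, hx]
  obtain ⟨s, hs⟩ :=
    (LinearMap.exact_lcomp_of_exact_of_surjective F p.exact_subtype_ker_map hp e).1 he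
  refine ⟨a, haJ, s, (LinearMap.cancel_right hp).1 (LinearMap.ext fun x ↦ ?_)⟩
  have hsx : s (p x) = e x := LinearMap.congr_fun hs x
  simp [hsx, e]

lemma exists_free_submodule_smul_mem [IsDomain R] (M : Type*) [AddCommGroup M] [Module R M]
    [Module.Finite R M] :
    ∃ N : Submodule R M, Module.Free R N ∧ Module.Finite R N ∧
      ∃ a : R, a ≠ 0 ∧ ∀ x : M, a • x ∈ N := by
  obtain ⟨n, v, hv⟩ := Module.Finite.exists_fin (R := R) (M := M)
  obtain ⟨I, hI, hmax⟩ := exists_maximal_linearIndepOn R v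
  let N := Submodule.span R (v '' I)
  have hsmul (i : Fin n) : ∃ a : R, a ≠ 0 ∧ a • v i ∈ N := by
    by_cases hi : i ∈ I
    · exact ⟨1, one_ne_zero, by simpa using Submodule.subset_span (Set.mem_image_of_mem v hi)⟩
    · exact hmax i hi
  choose a ha haN using hsmul
  refine ⟨N, ?_, .span_of_finite R (I.toFinite.image v), ∏ i, a i,
    Finset.prod_ne_zero_iff.2 fun i _ ↦ ha i, ?_⟩
  · have hN : N = Submodule.span R (Set.range fun i : I ↦ v i) := by rw [← Set.image_eq_range]
    rw [hN]
    exact .of_basis (Module.Basis.span hI)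
  · suffices ⊤ ≤ N.comap (LinearMap.lsmul R M (∏ i, a i)) from fun x ↦ this trivial
    rw [← hv, Submodule.span_le]
    rintro _ ⟨i, rfl⟩
    obtain ⟨c, hc⟩ := Finset.dvd_prod_of_mem a (Finset.mem_univ i)
    simpa [hc, mul_comm (a i), mul_smul] using N.smul_mem c (haN i)

lemma noZeroSMulDivisors_iff_exists_injective_linearMap_fin_fun [IsDomain R] (M : Type*)
    [AddCommGroup M] [Module R M] [Module.Finite R M] :
    NoZeroSMulDivisors R M ↔
      ∃ (n : ℕ) (f : M →ₗ[R] (Fin n → R)), Function.Injective f := by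
  constructor
  · intro
    obtain ⟨N, _, _, a, ha, haN⟩ := exists_free_submodule_smul_mem (R := R) M
    let e := (Module.finBasis R N).equivFun
    refine ⟨_, e.toLinearMap ∘ₗ (LinearMap.lsmul R M a).codRestrict N haN,
      e.injective.comp fun x y hxy ↦ ?_⟩
    exact smul_right_injective M ha (congrArg Subtype.val hxy)
  · rintro ⟨n, f, hf⟩
    exact hf.noZeroSMulDivisors f f.map_zero f.map_smul

end LinearAlgebra

section Ext

variable {R : Type u} [CommRing R] {M A : Type u} [AddCommGroup M] [Module R M]
  [AddCommGroup A] [Module R A]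

lemma annihilator_le_annihilator_extMod (n : ℕ) :
    Module.annihilator R A ≤ Module.annihilator R (extMod R M A n) := by
  let P := projectiveResolution (ModuleCat.of R M)
  let S := (P.complex.linearYonedaObj R (ModuleCat.of R A)).sc n
  have hHom : Module.annihilator R A ≤ Module.annihilator R S.X₂ := fun r hr ↦ by
    refine Module.mem_annihilator.2 fun (f : P.complex.X n ⟶ ModuleCat.of R A) ↦ ?_
    change r • f = 0
    ext x
    exact Module.mem_annihilator.1 hr _
  calc Module.annihilator R A ≤ Module.annihilator R S.X₂ := hHom
    _ ≤ Module.annihilator R (LinearMap.ker S.g.hom) :=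
      LinearMap.annihilator_le_of_injective _ (Submodule.injective_subtype _)
    _ ≤ Module.annihilator R (LinearMap.ker S.g.hom ⧸ LinearMap.range S.moduleCatToCycles) :=
      LinearMap.annihilator_le_of_surjective _ (Submodule.mkQ_surjective _)
    _ = Module.annihilator R (extMod R M A n) :=
      (P.isoExt n (ModuleCat.of R A) ≪≫ S.moduleCatHomologyIso).toLinearEquiv.annihilator_eq.symm

lemma subsingleton_extMod_one_iff_exact (P : ProjectiveResolution (ModuleCat.of R M)) :
    Subsingleton (extMod R M A 1) ↔ Function.Exact
      (LinearMap.lcomp R A (P.complex.d 1 0).hom) (LinearMap.lcomp R A (P.complex.d 2 1).hom) := by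
  rw [← ModuleCat.isZero_iff_subsingleton, extMod,
    (P.isoExt 1 (ModuleCat.of R A)).isZero_iff, ← HomologicalComplex.exactAt_iff_isZero_homology,
    HomologicalComplex.exactAt_iff' _ 0 1 2 (by simp) (by simp),
    ShortComplex.ShortExact.moduleCat_exact_iff_function_exact]
  refine ModuleCat.homEquiv.forall_congr fun {f} ↦ Iff.iff ?_ ?_
  · exact ModuleCat.hom_ext_iff
  · exact ModuleCat.homEquiv.exists_congr fun {g} ↦ ModuleCat.hom_ext_iff

lemma subsingleton_extMod_one_iff {F : Type u} [AddCommGroup F] [Module R F] [Module.Projective R F]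
    {p : F →ₗ[R] M} (hp : Function.Surjective p) :
    Subsingleton (extMod R M A 1) ↔
      Function.Surjective (LinearMap.lcomp R A (LinearMap.ker p).subtype) := by
  let P := projectiveResolution (ModuleCat.of R M)
  let q : P.complex.X 0 →ₗ[R] M := (P.π.f 0).hom
  have hq : Function.Surjective q :=
    (ModuleCat.epi_iff_surjective _).1 (inferInstance : Epi (P.π.f 0))
  have : Module.Projective R (P.complex.X 0) :=
    (IsProjective.iff_projective (P.complex.X 0)).2 (P.projective 0)
  have h₀ : Function.Exact (P.complex.d 1 0).hom q :=
    (ShortComplex.ShortExact.moduleCat_exact_iff_function_exact _).1 P.exact₀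
  have h₁ : Function.Exact (P.complex.d 2 1).hom (P.complex.d 1 0).hom :=
    (ShortComplex.ShortExact.moduleCat_exact_iff_function_exact _).1 (P.exact_succ 0)
  rw [subsingleton_extMod_one_iff_exact P, exact_lcomp_iff_surjective_lcomp_ker h₁ h₀]
  obtain ⟨u, hu⟩ := Module.projective_lifting_property p q hp
  obtain ⟨v, hv⟩ := Module.projective_lifting_property q p hq
  exact ⟨surjective_lcomp_ker_of_comp_eq hu hv, surjective_lcomp_ker_of_comp_eq hv hu⟩

end Ext

section AbsolutelyWPure

variable {R : Type u} [CommRing R]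

lemma isGVIdeal_top : IsGVIdeal R ⊤ := by
  refine ⟨Ideal.fg_top R, fun a b h ↦ ?_, fun f ↦ ⟨f ⟨1, trivial⟩, ?_⟩⟩
  · simpa using LinearMap.congr_fun h ⟨1, trivial⟩
  · ext x
    calc f ⟨1, trivial⟩ * x = f ((x : R) • ⟨1, trivial⟩) := by
          rw [map_smul, smul_eq_mul, mul_comm]
      _ = f x := by congr 1; ext; simp

lemma isDWRing_iff_forall_isGVIdeal_eq_top :
    IsDWRing R ↔ ∀ J : Ideal R, IsGVIdeal R J → J = ⊤ := by
  constructor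
  · intro h J hJ
    by_contra hne
    obtain ⟨m, hm, hJm⟩ := Ideal.exists_le_maximal J hne
    exact hm.ne_top <| (Ideal.eq_top_iff_one m).2 <|
      h m hm 1 J hJ fun j hj ↦ by simpa using hJm hj
  · intro h m _ x J hJ hx
    simpa using hx 1 (h J hJ ▸ trivial)

lemma IsAbsolutelyWPure.of_forall_subsingleton_extMod {A : Type u} [AddCommGroup A] [Module R A]
    (h : ∀ (N : Type u) [AddCommGroup N] [Module R N], Module.FinitePresentation R N →
      Subsingleton (extMod R N A 1)) :
    IsAbsolutelyWPure R A := fun N _ _ hN _ ↦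
  have := h N hN
  ⟨⊤, isGVIdeal_top, fun _ _ ↦ Subsingleton.elim _ _⟩

lemma IsGVIdeal.isAbsolutelyWPure_of_le_annihilator {J : Ideal R} (hJ : IsGVIdeal R J)
    {A : Type u} [AddCommGroup A] [Module R A] (hA : J ≤ Module.annihilator R A) :
    IsAbsolutelyWPure R A := fun _ _ _ _ x ↦
  ⟨J, hJ, fun _ hj ↦ Module.mem_annihilator.1 (annihilator_le_annihilator_extMod 1 (hA hj)) x⟩

lemma IsDWRing.isWFPProjective_of_finitePresentation (hR : IsDWRing R) (M : Type u)
    [AddCommGroup M] [Module R M] [Module.FinitePresentation R M] : IsWFPProjective R M := by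
  intro A _ _ hA
  refine subsingleton_of_forall_eq 0 fun x ↦ ?_
  obtain ⟨J, hJ, hJx⟩ := hA M ‹_› x
  rw [isDWRing_iff_forall_isGVIdeal_eq_top.1 hR J hJ] at hJx
  simpa using hJx 1 trivial

end AbsolutelyWPure

section EventuallyZero

/-- The submodule of the product `∏ i, E i` consisting of the families that vanish along the filter
`l`. It interpolates between the direct sum (`l` cofinite) and the product (`l = ⊥`); any map into
it from a finitely generated module vanishes along `l` as a whole. -/
def eventuallyZero (R : Type*) [CommRing R] {ι : Type*} (l : Filter ι) (E : ι → Type*)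
    [∀ i, AddCommGroup (E i)] [∀ i, Module R (E i)] : Submodule R (∀ i, E i) where
  carrier := {x | ∀ᶠ i in l, x i = 0}
  zero_mem' := .of_forall fun _ ↦ rfl
  add_mem' hx hy := by
    filter_upwards [hx, hy] with i hxi hyi
    rw [Pi.add_apply, hxi, hyi, add_zero]
  smul_mem' r x hx := by
    filter_upwards [hx] with i hxi
    rw [Pi.smul_apply, hxi, smul_zero]

lemma eventually_proj_comp_eq_zero {R ι N : Type*} [CommRing R] {l : Filter ι} {E : ι → Type*}
    [∀ i, AddCommGroup (E i)] [∀ i, Module R (E i)] [AddCommGroup N] [Module R N]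
    [Module.Finite R N] (f : N →ₗ[R] eventuallyZero R l E) :
    ∀ᶠ i in l, LinearMap.proj i ∘ₗ (eventuallyZero R l E).subtype ∘ₗ f = 0 := by
  obtain ⟨T, hT⟩ := Module.Finite.fg_top (R := R) (M := N)
  filter_upwards [(Filter.eventually_all_finset T).2 fun t _ ↦ (f t).2] with i hi
  exact LinearMap.ext_on hT hi

variable {R ι : Type u} [CommRing R]

lemma surjective_lcomp_subtype_eventuallyZero {l : Filter ι} {E : ι → Type u}
    [∀ i, AddCommGroup (E i)] [∀ i, Module R (E i)] [∀ i, Module.Injective R (E i)]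
    {F : Type u} [AddCommGroup F] [Module R F] [Module.Finite R F] {K : Submodule R F} (hK : K.FG) :
    Function.Surjective (LinearMap.lcomp R (eventuallyZero R l E) K.subtype) := by
  intro g
  have : Module.Finite R K := .of_fg hK
  let gAt (i : ι) : K →ₗ[R] E i := LinearMap.proj i ∘ₗ (eventuallyZero R l E).subtype ∘ₗ g
  have hext (i : ι) : ∃ h : F →ₗ[R] E i, h ∘ₗ K.subtype = gAt i ∧ (gAt i = 0 → h = 0) := by
    by_cases hi : gAt i = 0
    · exact ⟨0, by rw [hi, LinearMap.zero_comp], fun _ ↦ rfl⟩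
    · obtain ⟨h, hh⟩ := Module.Injective.extension_property R _ _ _ K.subtype
        K.injective_subtype (gAt i)
      exact ⟨h, hh, fun h0 ↦ absurd h0 hi⟩
  choose h hhg hh0 using hext
  have hmem (x : F) : LinearMap.pi h x ∈ eventuallyZero R l E := by
    filter_upwards [eventually_proj_comp_eq_zero g] with i hi
    rw [LinearMap.pi_apply, hh0 i hi, LinearMap.zero_apply]
  refine ⟨(LinearMap.pi h).codRestrict _ hmem, ?_⟩
  ext x i
  exact LinearMap.congr_fun (hhg i) x

lemma isAbsolutelyWPure_eventuallyZero (l : Filter ι) (E : ι → Type u)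
    [∀ i, AddCommGroup (E i)] [∀ i, Module R (E i)] [∀ i, Module.Injective R (E i)] :
    IsAbsolutelyWPure R (eventuallyZero R l E) := by
  refine .of_forall_subsingleton_extMod fun N _ _ _ ↦ ?_
  obtain ⟨n, p, hp⟩ := Module.Finite.exists_fin' R N
  exact (subsingleton_extMod_one_iff hp).2 <|
    surjective_lcomp_subtype_eventuallyZero (Module.FinitePresentation.fg_ker p hp)

end EventuallyZero

section WFPProjective

variable {R : Type u} [CommRing R]

lemma fg_of_forall_surjective_lcomp_subtype_eventuallyZero {F : Type u} [AddCommGroup F]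
    [Module R F] [Module.Finite R F] {K : Submodule R F}
    (h : ∀ (ι : Type u) (l : Filter ι) (E : ι → Type u) [∀ i, AddCommGroup (E i)]
      [∀ i, Module R (E i)] [∀ i, Module.Injective R (E i)],
      Function.Surjective (LinearMap.lcomp R (eventuallyZero R l E) K.subtype)) :
    K.FG := by
  let L (s : Finset K) : Submodule R F := Submodule.span R (Subtype.val '' (s : Set K))
  let E (s : Finset K) : ModuleCat.{u} R := Injective.under (ModuleCat.of R (F ⧸ L s))
  have (s : Finset K) : Module.Injective R (E s) :=
    have : Injective (ModuleCat.of R (E s)) := inferInstanceAs (Injective (Injective.under _))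
    Module.injective_module_of_injective_object R _
  let φ (s : Finset K) : F →ₗ[R] E s :=
    (Injective.ι (ModuleCat.of R (F ⧸ L s))).hom ∘ₗ (L s).mkQ
  have hφ (s : Finset K) : LinearMap.ker (φ s) = L s := by
    rw [LinearMap.ker_comp_of_ker_eq_bot, Submodule.ker_mkQ]
    exact LinearMap.ker_eq_bot.2 ((ModuleCat.mono_iff_injective _).1 inferInstance)
  have hmem (x : K) : LinearMap.pi φ x ∈ eventuallyZero R Filter.atTop fun s ↦ E s := by
    filter_upwards [Filter.eventually_ge_atTop {x}] with s hs
    have hx : (x : F) ∈ L s :=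
      Submodule.subset_span (Set.mem_image_of_mem _ (hs (Finset.mem_singleton_self x)))
    rwa [← hφ] at hx
  obtain ⟨f, hf⟩ :=
    h _ Filter.atTop (fun s ↦ E s) ((LinearMap.pi φ ∘ₗ K.subtype).codRestrict _ hmem)
  obtain ⟨s, hs⟩ := (eventually_proj_comp_eq_zero f).exists
  suffices K = L s from this ▸ Submodule.fg_span (s.finite_toSet.image _)
  refine le_antisymm (fun x hx ↦ ?_) (Submodule.span_le.2 (by rintro _ ⟨x, -, rfl⟩; exact x.2))
  have hfx : (f x).1 s = φ s x :=
    congrFun (congrArg Subtype.val (LinearMap.congr_fun hf ⟨x, hx⟩)) s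
  rw [← hφ, LinearMap.mem_ker, ← hfx]
  exact LinearMap.congr_fun hs x

lemma IsWFPProjective.finitePresentation {M : Type u} [AddCommGroup M] [Module R M]
    [Module.Finite R M] (hM : IsWFPProjective R M) : Module.FinitePresentation R M := by
  obtain ⟨n, p, hp⟩ := Module.Finite.exists_fin' R M
  refine Module.finitePresentation_of_surjective p hp <|
    fg_of_forall_surjective_lcomp_subtype_eventuallyZero fun ι l E _ _ _ ↦ ?_
  exact (subsingleton_extMod_one_iff hp).1 (hM _ (isAbsolutelyWPure_eventuallyZero l E))

lemma IsGVIdeal.eq_top_of_isWFPProjective {J : Ideal R} (hJ : IsGVIdeal R J)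
    (hproj : IsWFPProjective R J) : J = ⊤ := by
  have : Module.Finite R J := .of_fg hJ.1
  have := hproj.finitePresentation
  obtain ⟨n, p, hp⟩ := Module.Finite.exists_fin' R J
  obtain ⟨a, ha, s, hs⟩ := exists_comp_eq_smul_id_of_forall_surjective_lcomp_ker hp
    (Module.FinitePresentation.fg_ker p hp) fun A _ _ hA ↦
      (subsingleton_extMod_one_iff hp).1 (hproj A (hJ.isAbsolutelyWPure_of_le_annihilator hA))
  choose r hr using fun i ↦ hJ.2.2 (LinearMap.proj i ∘ₗ s)
  have hsr (y : J) : s y = (y : R) • r := by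
    ext i
    simpa [mul_comm] using (LinearMap.congr_fun (hr i) y).symm
  have hpr : (p r : R) = a := by
    refine hJ.2.1 (LinearMap.ext fun y ↦ ?_)
    have hy : p (s y) = a • y := LinearMap.congr_fun hs y
    rw [hsr, map_smul] at hy
    simpa [mul_comm] using congrArg Subtype.val hy
  rw [Ideal.eq_top_iff_one]
  have haJ : a ∈ J := hpr ▸ (p r).2
  simpa using J.sub_mem haJ ha

end WFPProjective

lemma IsCoherentRing.finitePresentation_of_injective {R : Type u} [CommRing R]
    (hR : IsCoherentRing R) {n : ℕ} {M : Type*} [AddCommGroup M] [Module R M] [Module.Finite R M]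
    {f : M →ₗ[R] (Fin n → R)} (hf : Function.Injective f) : Module.FinitePresentation R M := by
  induction n generalizing M with
  | zero =>
    have := hf.subsingleton
    infer_instance
  | succ n ih =>
    let g : M →ₗ[R] R := LinearMap.proj 0 ∘ₗ f
    have : Module.FinitePresentation R (LinearMap.range g) := hR _ (Submodule.fg_range g)
    have hg := g.surjective_rangeRestrict
    let K := LinearMap.ker g.rangeRestrict
    have : Module.Finite R K := .of_fg (Module.FinitePresentation.fg_ker _ hg)
    let tail : K →ₗ[R] (Fin n → R) := LinearMap.funLeft R R Fin.succ ∘ₗ f ∘ₗ K.subtype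
    have htail : Function.Injective tail := by
      rw [injective_iff_map_eq_zero]
      rintro ⟨x, hx⟩ h
      refine Subtype.ext ((map_eq_zero_iff f hf).1 (funext (Fin.cases ?_ ?_)))
      · exact congrArg Subtype.val hx
      · exact congrFun h
    have := ih htail
    exact Module.finitePresentation_of_ker _ hg

theorem isCoherentDW_iff_fg_torsionFree_wFPProjective_general (R : Type u) [CommRing R] :
    (IsCoherentRing R ∧ IsDWRing R) ↔
      ∀ (M : Type u) [AddCommGroup M] [Module R M], Module.Finite R M →
        (∃ (n : ℕ) (f : M →ₗ[R] (Fin n → R)), Function.Injective f) → IsWFPProjective R M := by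
  constructor
  · rintro ⟨hcoh, hDW⟩ M _ _ _ ⟨n, f, hf⟩
    have := hcoh.finitePresentation_of_injective hf
    exact hDW.isWFPProjective_of_finitePresentation M
  · intro h
    have hideal (J : Ideal R) (hJ : J.FG) : IsWFPProjective R J :=
      h J (.of_fg hJ) ⟨1, .pi fun _ ↦ J.subtype, fun x y hxy ↦ Subtype.ext (congrFun hxy 0)⟩
    refine ⟨fun I hI ↦ ?_, isDWRing_iff_forall_isGVIdeal_eq_top.2 fun J hJ ↦ ?_⟩
    · have : Module.Finite R I := .of_fg hI
      exact (hideal I hI).finitePresentation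
    · exact hJ.eq_top_of_isWFPProjective (hideal J hJ.1)

/-- A domain `R` is a coherent DW-domain iff every finitely generated torsion-free
module is `w`-FP-projective. -/
theorem isCoherentDW_iff_fg_torsionFree_wFPProjective (R : Type u) [CommRing R]
    [IsDomain R] :
    (IsCoherentRing R ∧ IsDWRing R) ↔
      ∀ (M : Type u) [AddCommGroup M] [Module R M], Module.Finite R M →
        NoZeroSMulDivisors R M → IsWFPProjective R M :=
  (isCoherentDW_iff_fg_torsionFree_wFPProjective_general R).trans <|
    forall₄_congr fun M _ _ _ ↦ by
      rw [noZeroSMulDivisors_iff_exists_injective_linearMap_fin_fun]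
end

section
/- Let R be a coherent ring and M an R-module with at least one exact sequence 0 → P_n → P_{n-1} → ... → P_0 → M → 0 with each P_i w-FP-projective. Then for every exact sequence 0 → Q_n → Q_{n-1} → ... → Q_0 → M → 0 with Q_0,...,Q_{n-1} projective, the module Q_n is w-FP-projective. -/
open CategoryTheory

universe u

/-!
Over a coherent ring, cosyzygies of absolutely `w`-pure modules are absolutely `w`-pure: if
`0 → A → E → L → 0` is exact with `E` injective and `0 → K → R^m → N → 0` is exact with `N`
finitely presented, then `K` is again finitely presented, and `Ext^1(N, L)` embeds into
`Ext^2(N, A)`, which is a quotient of the GV-torsion module `Ext^1(K, A)`. By dimension shifting,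
`Ext^k(M, A) = 0` for all `k ≥ 1` when `M` is `w`-FP-projective and `A` is absolutely `w`-pure.

Hence, if `0 → K → Q → M → 0` is exact with `Q` `w`-FP-projective, then `w-fpd M ≤ n + 1` if and
only if `w-fpd K ≤ n`. Iterating, `w-fpd M ≤ n` if and only if the last term of an exact sequence
`0 → Q_n → ⋯ → Q_0 → M → 0` with `Q_0, …, Q_{n-1}` `w`-FP-projective is itself `w`-FP-projective.
The right-hand side therefore does not depend on the sequence.
-/

universe w v

section Ext

variable {R : Type*} [Ring R] {C : Type*} [Category.{v} C] [Abelian C] [Linear R C]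
  [HasExt.{w} C] {X : C}

theorem smul_extMk (P : ProjectiveResolution X) {Y : C} (r : R) {n : ℕ} (f : P.complex.X n ⟶ Y)
    (m : ℕ) (hm : n + 1 = m) (hf : P.complex.d m n ≫ f = 0) :
    r • P.extMk f m hm hf = P.extMk (r • f) m hm (by simp [hf]) := by
  simp [Abelian.Ext.smul_eq_comp_mk₀, P.extMk_comp_mk₀]

variable (R) in
/-- Classes in `Ext^n(X, Y)` of the cocycles `P_n ⟶ Y` on a projective resolution `P` of `X`. -/
noncomputable def extMkLinearMap (P : ProjectiveResolution X) (Y : C) (n : ℕ) :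
    LinearMap.ker (Linear.leftComp R Y (P.complex.d (n + 1) n)) →ₗ[R] Abelian.Ext X Y n where
  toFun f := P.extMk f.1 (n + 1) rfl f.2
  map_add' f g := (P.add_extMk f.1 g.1 (n + 1) rfl f.2 g.2).symm
  map_smul' r f := (smul_extMk P r f.1 (n + 1) rfl f.2).symm

theorem extMkLinearMap_surjective (P : ProjectiveResolution X) (Y : C) (n : ℕ) :
    Function.Surjective (extMkLinearMap R P Y n) := by
  intro x
  obtain ⟨f, hf, rfl⟩ := P.extMk_surjective x (n + 1) rfl
  exact ⟨⟨f, hf⟩, rfl⟩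

theorem ker_extMkLinearMap_succ (P : ProjectiveResolution X) (Y : C) (n : ℕ) :
    LinearMap.ker (extMkLinearMap R P Y (n + 1)) =
      LinearMap.range
        ((P.complex.linearYonedaObj R Y).sc' n (n + 1) (n + 2)).moduleCatToCycles := by
  ext ⟨f, hf⟩
  refine (P.extMk_eq_zero_iff f (n + 2) rfl hf n rfl).trans ?_
  exact ⟨fun ⟨g, hg⟩ ↦ ⟨g, Subtype.ext hg⟩, fun ⟨g, hg⟩ ↦ ⟨g, congrArg Subtype.val hg⟩⟩

variable (R) in
/-- Comparison between `Ext`, the derived functor of `Hom`, on which `extMod` is based, and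
`Abelian.Ext`, defined in the derived category, for which long exact sequences are available. -/
noncomputable def extSuccLinearEquiv [EnoughProjectives C] (X Y : C) (n : ℕ) :
    ((Ext R C (n + 1)).obj (Opposite.op X)).obj Y ≃ₗ[R] Abelian.Ext X Y (n + 1) :=
  let P := projectiveResolution X
  let K := P.complex.linearYonedaObj R Y
  let S := K.sc' n (n + 1) (n + 2)
  let φ : LinearMap.ker S.g.hom →ₗ[R] Abelian.Ext X Y (n + 1) := extMkLinearMap R P Y (n + 1)
  (P.isoExt (n + 1) Y ≪≫ K.homologyIsoSc' n (n + 1) (n + 2) (by simp) (by simp) ≪≫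
      S.moduleCatHomologyIso).toLinearEquiv ≪≫ₗ
    Submodule.quotEquivOfEq _ (LinearMap.ker φ) (ker_extMkLinearMap_succ P Y n).symm ≪≫ₗ
    φ.quotKerEquivOfSurjective (extMkLinearMap_surjective P Y (n + 1))

theorem postcomp_extClass_injective_of_injective_X₂ {S : ShortComplex C}
    (hS : S.ShortExact) [Injective S.X₂] (X : C) (n : ℕ) :
    Function.Injective (hS.extClass.postcomp X (rfl : n + 1 + 1 = n + 2)) := by
  rw [injective_iff_map_eq_zero]
  intro x hx
  obtain ⟨y, rfl⟩ := Abelian.Ext.covariant_sequence_exact₃ X hS x rfl hx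
  rw [y.eq_zero_of_injective, Abelian.Ext.zero_comp]

end Ext

section AbsolutelyWPure

variable {R : Type u} [CommRing R]

theorem IsGVTorsion.of_injective {M N : Type u} [AddCommGroup M] [Module R M] [AddCommGroup N]
    [Module R N] (f : M →ₗ[R] N) (hf : Function.Injective f) (hN : IsGVTorsion R N) :
    IsGVTorsion R M := by
  intro x
  obtain ⟨J, hJ, hJx⟩ := hN (f x)
  exact ⟨J, hJ, fun j hj ↦ hf (by rw [map_smul, hJx j hj, map_zero])⟩

theorem IsGVTorsion.of_surjective {M N : Type u} [AddCommGroup M] [Module R M] [AddCommGroup N]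
    [Module R N] (f : M →ₗ[R] N) (hf : Function.Surjective f) (hM : IsGVTorsion R M) :
    IsGVTorsion R N := by
  intro y
  obtain ⟨x, rfl⟩ := hf y
  obtain ⟨J, hJ, hJx⟩ := hM x
  exact ⟨J, hJ, fun j hj ↦ by rw [← map_smul, hJx j hj, map_zero]⟩

theorem isAbsolutelyWPure_iff_isGVTorsion_ext {A : ModuleCat.{u} R} :
    IsAbsolutelyWPure R A ↔ ∀ N : ModuleCat.{u} R, Module.FinitePresentation R N →
      IsGVTorsion R (Abelian.Ext N A 1) :=
  ⟨fun h N hN ↦ .of_surjective (extSuccLinearEquiv R N A 0).toLinearMap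
      (extSuccLinearEquiv R N A 0).surjective (h N hN),
    fun h N _ _ hN ↦ .of_injective (extSuccLinearEquiv R (.of R N) A 0).toLinearMap
      (extSuccLinearEquiv R (.of R N) A 0).injective (h (.of R N) hN)⟩

theorem IsCoherentRing.finitePresentation_of_injective_pi (hR : IsCoherentRing R) {n : ℕ}
    {N : Type u} [AddCommGroup N] [Module R N] [Module.Finite R N] (f : N →ₗ[R] Fin n → R)
    (hf : Function.Injective f) : Module.FinitePresentation R N := by
  induction n generalizing N with
  | zero =>
    have : Subsingleton N := hf.subsingleton
    exact Module.finitePresentation_of_projective R N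
  | succ n ih =>
    let a : N →ₗ[R] R := LinearMap.proj 0 ∘ₗ f
    have hrange : Module.FinitePresentation R (LinearMap.range a) :=
      hR _ (Module.Finite.iff_fg.1 inferInstance)
    have : Module.Finite R (LinearMap.ker a.rangeRestrict) :=
      Module.Finite.iff_fg.2 <|
        Module.FinitePresentation.fg_ker a.rangeRestrict a.surjective_rangeRestrict
    have hker : Module.FinitePresentation R (LinearMap.ker a.rangeRestrict) := by
      refine ih (LinearMap.funLeft R R Fin.succ ∘ₗ f ∘ₗ Submodule.subtype _) ?_
      rw [← LinearMap.ker_eq_bot, LinearMap.ker_eq_bot']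
      intro x hx
      have hx0 : f x 0 = 0 := congrArg Subtype.val x.2
      have hxsucc (j : Fin n) : f x j.succ = 0 := congrFun hx j
      refine Subtype.ext (hf ?_)
      rw [ZeroMemClass.coe_zero, map_zero]
      exact funext (Fin.cases hx0 hxsucc)
    exact Module.finitePresentation_of_ker a.rangeRestrict a.surjective_rangeRestrict

theorem IsCoherentRing.finitePresentation_ker (hR : IsCoherentRing R) {n : ℕ}
    {N : Type u} [AddCommGroup N] [Module R N] [Module.FinitePresentation R N]
    (p : (Fin n → R) →ₗ[R] N) (hp : Function.Surjective p) :
    Module.FinitePresentation R (LinearMap.ker p) :=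
  have : Module.Finite R (LinearMap.ker p) :=
    Module.Finite.iff_fg.2 (Module.FinitePresentation.fg_ker p hp)
  hR.finitePresentation_of_injective_pi (LinearMap.ker p).subtype
    (LinearMap.ker p).injective_subtype

theorem IsAbsolutelyWPure.of_shortExact_of_injective (hR : IsCoherentRing R)
    {S : ShortComplex (ModuleCat.{u} R)} (hS : S.ShortExact) [Injective S.X₂]
    (hA : IsAbsolutelyWPure R S.X₁) : IsAbsolutelyWPure R S.X₃ := by
  rw [isAbsolutelyWPure_iff_isGVTorsion_ext] at hA ⊢
  intro N _
  obtain ⟨n, p, hp⟩ := Module.Finite.exists_fin' R N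
  have hT : p.shortComplexKer.ShortExact := p.shortExact_shortComplexKer hp
  have : Projective p.shortComplexKer.X₂ :=
    (IsProjective.iff_projective (Fin n → R)).1 inferInstance
  have hExt₂ : IsGVTorsion R (Abelian.Ext N S.X₁ 2) :=
    .of_surjective (hT.extClass.precompOfLinear R S.X₁ (rfl : 1 + 1 = 2))
      (precomp_extClass_surjective_of_projective_X₂ S.X₁ hT 1)
      (hA (.of R (LinearMap.ker p)) (hR.finitePresentation_ker p hp))
  exact .of_injective (hS.extClass.postcompOfLinear R N (rfl : 1 + 1 = 2))
    (postcomp_extClass_injective_of_injective_X₂ hS N 0) hExt₂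

end AbsolutelyWPure

section WFPProjectiveDimension

variable {R : Type u} [CommRing R]

/-- The condition `w-fpd X ≤ n` on the `w`-FP-projective dimension: vanishing of
`Ext^{n+1}(X, A)`, in that degree only, for all absolutely `w`-pure modules `A`. -/
def HasWFPProjectiveDimensionLE (X : ModuleCat.{u} R) (n : ℕ) : Prop :=
  ∀ A : ModuleCat.{u} R, IsAbsolutelyWPure R A → Subsingleton (Abelian.Ext X A (n + 1))

theorem hasWFPProjectiveDimensionLE_zero_iff {X : ModuleCat.{u} R} :
    HasWFPProjectiveDimensionLE X 0 ↔ IsWFPProjective R X :=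
  ⟨fun h A _ _ hA ↦ (extSuccLinearEquiv R X (.of R A) 0).toEquiv.subsingleton_congr.2
      (h (.of R A) hA),
    fun h A hA ↦ (extSuccLinearEquiv R X A 0).toEquiv.subsingleton_congr.1 (h A hA)⟩

theorem IsWFPProjective.of_projective {M : Type u} [AddCommGroup M] [Module R M]
    (hM : Module.Projective R M) : IsWFPProjective R M := by
  have : Projective (ModuleCat.of R M) := (IsProjective.iff_projective M).1 hM
  exact hasWFPProjectiveDimensionLE_zero_iff.1 fun A _ ↦ subsingleton_of_forall_eq 0
    fun x : Abelian.Ext (ModuleCat.of R M) A 1 ↦ x.eq_zero_of_projective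

namespace HasWFPProjectiveDimensionLE

variable {S : ShortComplex (ModuleCat.{u} R)} {n : ℕ}

theorem of_retract {X Y : ModuleCat.{u} R} (r : Retract Y X)
    (h : HasWFPProjectiveDimensionLE X n) : HasWFPProjectiveDimensionLE Y n := by
  intro A hA
  have := h A hA
  refine subsingleton_of_forall_eq 0 fun x ↦ ?_
  rw [← x.mk₀_id_comp, ← r.retract, ← Abelian.Ext.mk₀_comp_mk₀,
    Abelian.Ext.comp_assoc_of_second_deg_zero,
    Subsingleton.elim ((Abelian.Ext.mk₀ r.r).comp x (zero_add _)) 0, Abelian.Ext.comp_zero]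

theorem succ (hR : IsCoherentRing R) {X : ModuleCat.{u} R} (h : HasWFPProjectiveDimensionLE X n) :
    HasWFPProjectiveDimensionLE X (n + 1) := by
  intro A hA
  obtain ⟨p⟩ := EnoughInjectives.presentation A
  have hS : (ShortComplex.mk _ _ (Limits.cokernel.condition p.f)).ShortExact :=
    { exact := ShortComplex.exact_cokernel p.f }
  have := h _ (hA.of_shortExact_of_injective hR hS)
  exact (postcomp_extClass_surjective_of_projective_X₂ hS X (n + 1)).subsingleton

theorem mono (hR : IsCoherentRing R) {X : ModuleCat.{u} R} {m : ℕ} (hmn : m ≤ n)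
    (h : HasWFPProjectiveDimensionLE X m) : HasWFPProjectiveDimensionLE X n := by
  induction hmn with
  | refl => exact h
  | step _ ih => exact ih.succ hR

theorem X₃_of_shortExact (hS : S.ShortExact) (h₁ : HasWFPProjectiveDimensionLE S.X₁ n)
    (h₂ : HasWFPProjectiveDimensionLE S.X₂ (n + 1)) :
    HasWFPProjectiveDimensionLE S.X₃ (n + 1) := by
  intro A hA
  have := h₁ A hA
  have := h₂ A hA
  refine subsingleton_of_forall_eq 0 fun x ↦ ?_
  obtain ⟨y, rfl⟩ := Abelian.Ext.contravariant_sequence_exact₃ hS A x (Subsingleton.elim _ _)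
    (add_comm 1 (n + 1))
  rw [Subsingleton.elim y 0, Abelian.Ext.comp_zero]

theorem X₁_of_shortExact (hS : S.ShortExact) (h₂ : HasWFPProjectiveDimensionLE S.X₂ n)
    (h₃ : HasWFPProjectiveDimensionLE S.X₃ (n + 1)) : HasWFPProjectiveDimensionLE S.X₁ n := by
  intro A hA
  have := h₂ A hA
  have := h₃ A hA
  refine subsingleton_of_forall_eq 0 fun x ↦ ?_
  obtain ⟨y, rfl⟩ := Abelian.Ext.contravariant_sequence_exact₁ hS A x (add_comm 1 (n + 1))
    (Subsingleton.elim _ _)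
  rw [Subsingleton.elim y 0, Abelian.Ext.comp_zero]

end HasWFPProjectiveDimensionLE

theorem hasWFPProjectiveDimensionLE_succ_X₃_iff (hR : IsCoherentRing R)
    {S : ShortComplex (ModuleCat.{u} R)} (hS : S.ShortExact) (h₂ : IsWFPProjective R S.X₂)
    {n : ℕ} : HasWFPProjectiveDimensionLE S.X₃ (n + 1) ↔ HasWFPProjectiveDimensionLE S.X₁ n :=
  have h₂' := hasWFPProjectiveDimensionLE_zero_iff.2 h₂
  ⟨.X₁_of_shortExact hS (h₂'.mono hR n.zero_le),
    fun h₁ ↦ .X₃_of_shortExact hS h₁ (h₂'.mono hR (n + 1).zero_le)⟩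

theorem hasWFPProjectiveDimensionLE_iff_isWFPProjective_syzygy (hR : IsCoherentRing R) {n : ℕ}
    {M : Type u} [AddCommGroup M] [Module R M]
    {Q : ℕ → Type u} [∀ i, AddCommGroup (Q i)] [∀ i, Module R (Q i)]
    (d : ∀ i, Q (i + 1) →ₗ[R] Q i) (ε : Q 0 →ₗ[R] M) (hn : Subsingleton (Q (n + 1)))
    (hε : Function.Surjective ε) (hex₀ : Function.Exact (d 0) ε)
    (hex : ∀ i, Function.Exact (d (i + 1)) (d i)) (hQ : ∀ i < n, IsWFPProjective R (Q i)) :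
    HasWFPProjectiveDimensionLE (.of R M) n ↔ IsWFPProjective R (Q n) := by
  induction n generalizing M Q with
  | zero =>
    have hεinj : Function.Injective ε := by
      rw [← LinearMap.ker_eq_bot, hex₀.linearMap_ker_eq, LinearMap.range_eq_bot]
      exact Subsingleton.elim _ _
    let e := (LinearEquiv.ofBijective ε ⟨hεinj, hε⟩).toModuleIso
    exact ⟨fun h ↦ hasWFPProjectiveDimensionLE_zero_iff.1 (h.of_retract (.ofIso e)),
      fun h ↦ (hasWFPProjectiveDimensionLE_zero_iff.2 h).of_retract (.ofIso e.symm)⟩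
  | succ n ih =>
    let ε' : Q 1 →ₗ[R] LinearMap.ker ε :=
      (d 0).codRestrict (LinearMap.ker ε) hex₀.apply_apply_eq_zero
    have hε' : Function.Surjective ε' := by
      rintro ⟨x, hx⟩
      obtain ⟨y, rfl⟩ := (hex₀ x).1 hx
      exact ⟨y, rfl⟩
    have hex' : Function.Exact (d 1) ε' := fun x ↦ Subtype.ext_iff.trans (hex 0 x)
    exact (hasWFPProjectiveDimensionLE_succ_X₃_iff hR (ε.shortExact_shortComplexKer hε)
      (hQ 0 n.succ_pos)).trans <| ih (Q := fun i ↦ Q (i + 1)) (fun i ↦ d (i + 1)) ε' hn hε' hex'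
        (fun i ↦ hex (i + 1)) fun i hi ↦ hQ (i + 1) (Nat.succ_lt_succ hi)

end WFPProjectiveDimension

theorem wFPProjective_syzygy_general (R : Type u) [CommRing R] (hR : IsCoherentRing R) (n : ℕ)
    (M : Type u) [AddCommGroup M] [Module R M]
    (P : ℕ → Type u) [∀ i, AddCommGroup (P i)] [∀ i, Module R (P i)]
    (dP : ∀ i, P (i + 1) →ₗ[R] P i) (εP : P 0 →ₗ[R] M)
    (hPtriv : ∀ i, n < i → Subsingleton (P i))
    (hPsurj : Function.Surjective εP)
    (hPex0 : Function.Exact (dP 0) εP)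
    (hPex : ∀ i, Function.Exact (dP (i + 1)) (dP i))
    (hPwfp : ∀ i, i ≤ n → IsWFPProjective R (P i))
    (Q : ℕ → Type u) [∀ i, AddCommGroup (Q i)] [∀ i, Module R (Q i)]
    (dQ : ∀ i, Q (i + 1) →ₗ[R] Q i) (εQ : Q 0 →ₗ[R] M)
    (hQtriv : ∀ i, n < i → Subsingleton (Q i))
    (hQsurj : Function.Surjective εQ)
    (hQex0 : Function.Exact (dQ 0) εQ)
    (hQex : ∀ i, Function.Exact (dQ (i + 1)) (dQ i))
    (hQwfp : ∀ i, i < n → IsWFPProjective R (Q i)) :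
    IsWFPProjective R (Q n) := by
  have hM : HasWFPProjectiveDimensionLE (.of R M) n :=
    (hasWFPProjectiveDimensionLE_iff_isWFPProjective_syzygy hR dP εP (hPtriv _ n.lt_succ_self)
      hPsurj hPex0 hPex fun i hi ↦ hPwfp i hi.le).2 (hPwfp n le_rfl)
  exact (hasWFPProjectiveDimensionLE_iff_isWFPProjective_syzygy hR dQ εQ (hQtriv _ n.lt_succ_self)
    hQsurj hQex0 hQex hQwfp).1 hM

/-- Over a coherent ring, if `M` admits an exact sequence
`0 → P_n → ⋯ → P_0 → M → 0` with each `P_i` `w`-FP-projective, then for every exact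
sequence `0 → Q_n → ⋯ → Q_0 → M → 0` with `Q_0, …, Q_{n-1}` projective, `Q_n` is
`w`-FP-projective. (Sequences are encoded as ℕ-indexed resolutions vanishing beyond
degree `n`.) -/
theorem wFPProjective_syzygy (R : Type u) [CommRing R] (hR : IsCoherentRing R) (n : ℕ)
    (M : Type u) [AddCommGroup M] [Module R M]
    (P : ℕ → Type u) [∀ i, AddCommGroup (P i)] [∀ i, Module R (P i)]
    (dP : ∀ i, P (i + 1) →ₗ[R] P i) (εP : P 0 →ₗ[R] M)
    (hPtriv : ∀ i, n < i → Subsingleton (P i))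
    (hPsurj : Function.Surjective εP)
    (hPex0 : Function.Exact (dP 0) εP)
    (hPex : ∀ i, Function.Exact (dP (i + 1)) (dP i))
    (hPwfp : ∀ i, i ≤ n → IsWFPProjective R (P i))
    (Q : ℕ → Type u) [∀ i, AddCommGroup (Q i)] [∀ i, Module R (Q i)]
    (dQ : ∀ i, Q (i + 1) →ₗ[R] Q i) (εQ : Q 0 →ₗ[R] M)
    (hQtriv : ∀ i, n < i → Subsingleton (Q i))
    (hQsurj : Function.Surjective εQ)
    (hQex0 : Function.Exact (dQ 0) εQ)
    (hQex : ∀ i, Function.Exact (dQ (i + 1)) (dQ i))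
    (hQproj : ∀ i, i < n → Module.Projective R (Q i)) :
    IsWFPProjective R (Q n) :=
  wFPProjective_syzygy_general R hR n M P dP εP hPtriv hPsurj hPex0 hPex hPwfp Q dQ εQ hQtriv
    hQsurj hQex0 hQex fun i hi ↦ .of_projective (hQproj i hi)
end
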